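/- Let g : ℝ^n → ℝ be a polynomial, let R > 1, write μ = E_{x∼N(0,1)^n}[g(x)], and suppose HyperVar_R[g] ≤ θ·μ² for some θ ≥ 0. Then (E_{x∼N(0,1)^n}[|g(x) − μ|^{1+R²}])^{1/(1+R²)} ≤ √θ·|μ|; i.e., for x ∼ N(0,1)^n the random variable g(x) is (1+R², √θ)-hyperconcentrated. -/

import Mathlib

open MeasureTheory ProbabilityTheory MvPolynomial

/-- The standard Gaussian measure `N(0,1)^n` on `ℝ^n`. -/
noncomputable def gaussianN (n : ℕ) : Measure (Fin n → ℝ) :=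
  Measure.pi fun _ => gaussianReal 0 1

/-- The normalized probabilists' Hermite polynomial `h_k = H_k / √(k!)`. -/
noncomputable def hermiteFn (k : ℕ) (t : ℝ) : ℝ :=
  ((Polynomial.hermite k).map (Int.castRingHom ℝ)).eval t / Real.sqrt (Nat.factorial k)

/-- The multivariate Hermite polynomial `h_α(x) = ∏ i, h_{α i}(x i)`. -/
noncomputable def hermiteMv {n : ℕ} (α : Fin n → ℕ) (x : Fin n → ℝ) : ℝ :=
  ∏ i, hermiteFn (α i) (x i)

/-- Hermite coefficient `f̂(α) = E_{x ∼ N(0,1)^n}[f(x)·h_α(x)]` of a function. -/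
noncomputable def hermiteCoeffF {n : ℕ} (f : (Fin n → ℝ) → ℝ) (α : Fin n → ℕ) : ℝ :=
  ∫ x, f x * hermiteMv α x ∂(gaussianN n)

/-- Hermite coefficient `ĝ(α)` of a polynomial. -/
noncomputable def hermiteCoeff {n : ℕ} (g : MvPolynomial (Fin n) ℝ) (α : Fin n → ℕ) : ℝ :=
  hermiteCoeffF (fun x => eval x g) α

/-- The squared Gaussian 2-norm `‖g‖₂² = E_{x ∼ N(0,1)^n}[g(x)²]`. -/
noncomputable def norm2sq {n : ℕ} (g : MvPolynomial (Fin n) ℝ) : ℝ :=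
  ∫ x, (eval x g) ^ 2 ∂(gaussianN n)

/-- The `λ`-zoom of `g` at `x`: `g_{λ|x}(y) = g(√(1-λ)·x + √λ·y)`, as a polynomial in `y`. -/
noncomputable def zoom {n : ℕ} (g : MvPolynomial (Fin n) ℝ) (lam : ℝ) (x : Fin n → ℝ) :
    MvPolynomial (Fin n) ℝ :=
  aeval (fun i => C (Real.sqrt (1 - lam) * x i) + C (Real.sqrt lam) * X i) g

/-- `HyperVar_R[g^{≥m}] = Σ_{|α| ≥ m} R^{2|α|}·ĝ(α)²`. -/
noncomputable def hyperVarGE {n : ℕ} (R : ℝ) (m : ℕ) (g : MvPolynomial (Fin n) ℝ) : ℝ :=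
  ∑' α : Fin n → ℕ, if m ≤ ∑ i, α i then R ^ (2 * ∑ i, α i) * hermiteCoeff g α ^ 2 else 0

/-- `HyperVar_R[g] = Σ_{α ≠ 0} R^{2|α|}·ĝ(α)²`. -/
noncomputable def hyperVar {n : ℕ} (R : ℝ) (g : MvPolynomial (Fin n) ℝ) : ℝ :=
  hyperVarGE R 1 g

/-- A nice distribution of polynomials of degree at most `d` on `ℝ^n`, indexed by
`υ ∈ ℝ^I`: each `g υ` has degree at most `d` and each coefficient of `g υ` is a
polynomial of degree at most `d` in `υ`. -/
def NiceFamily (n I d : ℕ) (g : (Fin I → ℝ) → MvPolynomial (Fin n) ℝ) : Prop :=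
  (∀ υ, (g υ).totalDegree ≤ d) ∧
  ∀ m : Fin n →₀ ℕ, ∃ P : MvPolynomial (Fin I) ℝ,
    P.totalDegree ≤ d ∧ ∀ υ, coeff m (g υ) = eval υ P

lemma eLpNorm_le_ofReal_iff {Ω : Type*} [MeasurableSpace Ω] {μ : Measure Ω} {q A : ℝ}
    (hq : 0 < q) (hA : 0 ≤ A) (f : Ω → ℝ) :
    eLpNorm f (ENNReal.ofReal q) μ ≤ ENNReal.ofReal A ↔
      ∫⁻ x, ENNReal.ofReal (|f x| ^ q) ∂μ ≤ ENNReal.ofReal (A ^ q) := by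
  rw [eLpNorm_eq_lintegral_rpow_enorm_toReal (by simpa using hq) ENNReal.ofReal_ne_top,
    ENNReal.toReal_ofReal hq.le, one_div, ENNReal.rpow_inv_le_iff hq,
    ENNReal.ofReal_rpow_of_nonneg hA hq.le]
  simp_rw [Real.enorm_eq_ofReal_abs, ENNReal.ofReal_rpow_of_nonneg (abs_nonneg _) hq.le]

lemma lintegral_rpow_sum_le {Ω ι : Type*} [MeasurableSpace Ω] {μ : Measure Ω} {r : ℝ}
    (hr : 1 ≤ r) (s : Finset ι) {w A : ι → ℝ} {u : ι → Ω → ℝ} (hw : ∀ i, 0 ≤ w i)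
    (hA : ∀ i, 0 ≤ A i) (hu : ∀ i x, 0 ≤ u i x) (hum : ∀ i, Measurable (u i))
    (h : ∀ i, ∫⁻ x, ENNReal.ofReal (u i x ^ r) ∂μ ≤ ENNReal.ofReal (A i ^ r)) :
    ∫⁻ x, ENNReal.ofReal ((∑ i ∈ s, w i * u i x) ^ r) ∂μ ≤
      ENNReal.ofReal ((∑ i ∈ s, w i * A i) ^ r) := by
  have hr0 : 0 < r := by linarith
  have h' (i) : eLpNorm (u i) (ENNReal.ofReal r) μ ≤ ENNReal.ofReal (A i) := by
    rw [eLpNorm_le_ofReal_iff hr0 (hA i)]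
    simpa only [abs_of_nonneg (hu i _)] using h i
  have hS : 0 ≤ ∑ i ∈ s, w i * A i := Finset.sum_nonneg fun i _ => mul_nonneg (hw i) (hA i)
  have hsum : eLpNorm (∑ i ∈ s, w i • u i) (ENNReal.ofReal r) μ ≤
      ENNReal.ofReal (∑ i ∈ s, w i * A i) := by
    refine (eLpNorm_sum_le (fun i _ => ((hum i).const_smul (w i)).aestronglyMeasurable)
      (by simpa using hr)).trans ?_
    rw [ENNReal.ofReal_sum_of_nonneg fun i _ => mul_nonneg (hw i) (hA i)]
    refine Finset.sum_le_sum fun i _ => ?_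
    rw [eLpNorm_const_smul, ENNReal.ofReal_mul (hw i), Real.enorm_eq_ofReal (hw i)]
    gcongr
    exact h' i
  rw [eLpNorm_le_ofReal_iff hr0 hS] at hsum
  refine le_of_eq_of_le (lintegral_congr fun x => ?_) hsum
  rw [Finset.sum_apply, abs_of_nonneg]
  · rfl
  · exact Finset.sum_nonneg fun i _ => mul_nonneg (hw i) (hu i x)

/-- Every finite combination `∑ c i • φ i` has `L^q` norm at most `√(∑ w i * c i ^ 2)`. -/
def Hypercontractive {Ω ι : Type*} [MeasurableSpace Ω] (q : ℝ) (μ : Measure Ω)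
    (φ : ι → Ω → ℝ) (w : ι → ℝ) : Prop :=
  ∀ (s : Finset ι) (c : ι → ℝ), ∫⁻ x, ENNReal.ofReal (|∑ i ∈ s, c i * φ i x| ^ q) ∂μ ≤
    ENNReal.ofReal ((∑ i ∈ s, w i * c i ^ 2) ^ (q / 2))

lemma Hypercontractive.prod {Ω Ω' ι κ : Type*} [MeasurableSpace Ω] [MeasurableSpace Ω']
    {q : ℝ} (hq : 2 ≤ q) {μ : Measure Ω} {ν : Measure Ω'} [SFinite μ] [SFinite ν]
    {φ : ι → Ω → ℝ} {ψ : κ → Ω' → ℝ} {w : ι → ℝ} {v : κ → ℝ}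
    (hφ : Hypercontractive q μ φ w) (hψ : Hypercontractive q ν ψ v)
    (hφm : ∀ i, Measurable (φ i)) (hψm : ∀ j, Measurable (ψ j))
    (hw : ∀ i, 0 ≤ w i) (hv : ∀ j, 0 ≤ v j) :
    Hypercontractive q (μ.prod ν) (fun (i : ι × κ) x => φ i.1 x.1 * ψ i.2 x.2)
      (fun i => w i.1 * v i.2) := by
  classical
  intro s c
  set c' : ι × κ → ℝ := fun i => if i ∈ s then c i else 0 with hc'
  set S := s.image Prod.fst
  set T := s.image Prod.snd
  have hsub : s ⊆ S ×ˢ T := fun i hi =>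
    Finset.mem_product.2 ⟨Finset.mem_image_of_mem _ hi, Finset.mem_image_of_mem _ hi⟩
  have hL (x : Ω × Ω') : ∑ i ∈ s, c i * (φ i.1 x.1 * ψ i.2 x.2) =
      ∑ i ∈ S, (∑ j ∈ T, c' (i, j) * ψ j x.2) * φ i x.1 := by
    rw [Finset.sum_subset_zero_on_sdiff (g := fun i => c' i * (φ i.1 x.1 * ψ i.2 x.2)) hsub
      (fun i hi => by simp [hc', (Finset.mem_sdiff.1 hi).2]) (fun i hi => by simp [hc', hi]),
      Finset.sum_product]
    refine Finset.sum_congr rfl fun i _ => ?_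
    rw [Finset.sum_mul]
    exact Finset.sum_congr rfl fun j _ => by ring
  have hR : ∑ i ∈ s, w i.1 * v i.2 * c i ^ 2 =
      ∑ i ∈ S, w i * ∑ j ∈ T, v j * c' (i, j) ^ 2 := by
    rw [Finset.sum_subset_zero_on_sdiff (g := fun i => w i.1 * v i.2 * c' i ^ 2) hsub
      (fun i hi => by simp [hc', (Finset.mem_sdiff.1 hi).2]) (fun i hi => by simp [hc', hi]),
      Finset.sum_product]
    refine Finset.sum_congr rfl fun i _ => ?_
    rw [Finset.mul_sum]
    exact Finset.sum_congr rfl fun j _ => by ring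
  simp_rw [hL, hR]
  rw [lintegral_prod_symm _ (by fun_prop)]
  calc _ ≤ ∫⁻ y, ENNReal.ofReal
        ((∑ i ∈ S, w i * (∑ j ∈ T, c' (i, j) * ψ j y) ^ 2) ^ (q / 2)) ∂ν :=
        lintegral_mono fun y => hφ S _
    _ ≤ _ := by
      refine lintegral_rpow_sum_le (by linarith) S hw
        (fun i => Finset.sum_nonneg fun j _ => mul_nonneg (hv j) (sq_nonneg _))
        (fun i y => sq_nonneg _) (fun i => by fun_prop) fun i => ?_
      refine le_of_eq_of_le (lintegral_congr fun y => ?_) (hψ T fun j => c' (i, j))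
      rw [← sq_abs, ← Real.rpow_natCast, ← Real.rpow_mul (abs_nonneg _)]
      congr 2
      push_cast; ring

lemma Hypercontractive.map {Ω Ω' ι κ : Type*} [MeasurableSpace Ω] [MeasurableSpace Ω']
    {q : ℝ} {μ : Measure Ω} {ν : Measure Ω'} {φ : ι → Ω → ℝ} {w : ι → ℝ}
    (hφ : Hypercontractive q μ φ w) (hφm : ∀ i, Measurable (φ i)) (e : κ ↪ ι) {f : Ω' → Ω}
    (hf : MeasurePreserving f ν μ) :
    Hypercontractive q ν (fun k x => φ (e k) (f x)) (fun k => w (e k)) := by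
  intro s c
  have := hφ (s.map e) (Function.extend e c 0)
  simp only [Finset.sum_map, e.injective.extend_apply] at this
  rwa [← hf.lintegral_comp (by fun_prop)] at this

lemma Hypercontractive.pi {Ω ι : Type*} [MeasurableSpace Ω]
    {q : ℝ} (hq : 2 ≤ q) {μ : Measure Ω} [IsProbabilityMeasure μ]
    {φ : ι → Ω → ℝ} {w : ι → ℝ} (hφ : Hypercontractive q μ φ w)
    (hφm : ∀ i, Measurable (φ i)) (hw : ∀ i, 0 ≤ w i) (n : ℕ) :
    Hypercontractive q (Measure.pi fun _ : Fin n => μ)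
      (fun (α : Fin n → ι) x => ∏ k, φ (α k) (x k)) (fun α => ∏ k, w (α k)) := by
  induction n with
  | zero =>
    intro s c
    have hs : s = ∅ ∨ s = {default} := by
      rcases s.eq_empty_or_nonempty with h | ⟨a, h⟩
      · exact Or.inl h
      · refine Or.inr (Finset.ext fun b => ?_)
        rw [Finset.mem_singleton, Subsingleton.elim b a, Subsingleton.elim default a]
        simpa using h
    have h0 : (c default ^ 2) ^ (q / 2) = |c default| ^ q := by
      rw [← sq_abs, ← Real.rpow_natCast, ← Real.rpow_mul (abs_nonneg _)]
      congr 1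
      push_cast; ring
    have hq0 : q ≠ 0 := by linarith
    rcases hs with rfl | rfl
    · simp [Real.zero_rpow hq0]
    · simp [h0]
  | succ n ih =>
    have hprod := Hypercontractive.prod hq hφ ih hφm (fun α => by fun_prop) hw
      (fun α => Finset.prod_nonneg fun k _ => hw _)
    have := hprod.map (fun i => by fun_prop) (Fin.consEquiv fun _ => ι).symm.toEmbedding
      (measurePreserving_piFinSuccAbove (fun _ : Fin (n + 1) => μ) 0)
    convert this using 2 with α α
    · ext x
      rw [Fin.prod_univ_succ]
      rfl
    · rw [Fin.prod_univ_succ]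
      rfl

lemma two_mul_le_one_add_rpow_sub_one_sub_rpow {r : ℝ} (hr0 : 0 < r) (hr1 : r ≤ 1) {y : ℝ}
    (hy0 : 0 ≤ y) (hy1 : y ≤ 1) : 2 * r * y ≤ (1 + y) ^ r - (1 - y) ^ r := by
  set f : ℝ → ℝ := fun y => (1 + y) ^ r - (1 - y) ^ r - 2 * r * y with hf
  have hmono : MonotoneOn f (Set.Icc 0 1) := by
    refine monotoneOn_of_hasDerivWithinAt_nonneg (convex_Icc 0 1)
      (f' := fun y => r * (1 + y) ^ (r - 1) + r * (1 - y) ^ (r - 1) - 2 * r) ?_ ?_ ?_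
    · refine ContinuousOn.sub (ContinuousOn.sub ?_ ?_) (by fun_prop)
      · exact (ContinuousOn.rpow_const (by fun_prop) fun _ _ => Or.inr hr0.le)
      · exact (ContinuousOn.rpow_const (by fun_prop) fun _ _ => Or.inr hr0.le)
    · intro x hx
      rw [interior_Icc] at hx
      have h1 : HasDerivAt (fun y : ℝ => (1 + y) ^ r) (1 * r * (1 + x) ^ (r - 1)) x :=
        HasDerivAt.rpow_const ((hasDerivAt_id x).const_add 1) (Or.inl (by linarith [hx.1]))
      have h2 : HasDerivAt (fun y : ℝ => (1 - y) ^ r) (-1 * r * (1 - x) ^ (r - 1)) x :=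
        HasDerivAt.rpow_const ((hasDerivAt_id x).const_sub 1) (Or.inl (by linarith [hx.2]))
      have h3 : HasDerivAt (fun y : ℝ => 2 * r * y) (2 * r * 1) x :=
        (hasDerivAt_id x).const_mul _
      refine (((h1.sub h2).sub h3).congr_deriv ?_).hasDerivWithinAt
      ring
    · intro x hx
      rw [interior_Icc] at hx
      have ha : 0 < (1 + x) ^ (r - 1) := Real.rpow_pos_of_pos (by linarith [hx.1]) _
      have hb : 0 < (1 - x) ^ (r - 1) := Real.rpow_pos_of_pos (by linarith [hx.2]) _
      have hab : 1 ≤ (1 + x) ^ (r - 1) * (1 - x) ^ (r - 1) := by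
        rw [← Real.mul_rpow (by linarith [hx.1]) (by linarith [hx.2])]
        exact Real.one_le_rpow_of_pos_of_le_one_of_nonpos (by nlinarith [hx.1, hx.2])
          (by nlinarith [hx.1]) (by linarith)
      have : 2 ≤ (1 + x) ^ (r - 1) + (1 - x) ^ (r - 1) := by
        nlinarith [sq_nonneg ((1 + x) ^ (r - 1) - (1 - x) ^ (r - 1))]
      nlinarith
  have := hmono (Set.left_mem_Icc.2 zero_le_one) ⟨hy0, hy1⟩ hy0
  simp only [hf] at this
  norm_num at this
  linarith

lemma one_add_sq_le_avg_rpow {p : ℝ} (hp1 : 1 < p) (hp2 : p ≤ 2) {y : ℝ}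
    (hy0 : 0 ≤ y) (hy1 : y ≤ 1) :
    1 + p / 2 * ((p - 1) * y ^ 2) ≤ ((1 + y) ^ p + (1 - y) ^ p) / 2 := by
  set f : ℝ → ℝ := fun y => (1 + y) ^ p + (1 - y) ^ p - p * (p - 1) * y ^ 2 with hf
  have hmono : MonotoneOn f (Set.Icc 0 1) := by
    refine monotoneOn_of_hasDerivWithinAt_nonneg (convex_Icc 0 1)
      (f' := fun y => p * ((1 + y) ^ (p - 1) - (1 - y) ^ (p - 1) - 2 * (p - 1) * y)) ?_ ?_ ?_
    · refine ContinuousOn.sub (ContinuousOn.add ?_ ?_) (by fun_prop)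
      · exact (ContinuousOn.rpow_const (by fun_prop) fun _ _ => Or.inr (by linarith))
      · exact (ContinuousOn.rpow_const (by fun_prop) fun _ _ => Or.inr (by linarith))
    · intro x hx
      have h1 : HasDerivAt (fun y : ℝ => (1 + y) ^ p) (1 * p * (1 + x) ^ (p - 1)) x :=
        HasDerivAt.rpow_const ((hasDerivAt_id x).const_add 1) (Or.inr hp1.le)
      have h2 : HasDerivAt (fun y : ℝ => (1 - y) ^ p) (-1 * p * (1 - x) ^ (p - 1)) x :=
        HasDerivAt.rpow_const ((hasDerivAt_id x).const_sub 1) (Or.inr hp1.le)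
      have h3 : HasDerivAt (fun y : ℝ => p * (p - 1) * y ^ 2) (p * (p - 1) * (2 * x)) x := by
        simpa using (hasDerivAt_pow 2 x).const_mul (p * (p - 1))
      refine (((h1.add h2).sub h3).congr_deriv ?_).hasDerivWithinAt
      ring
    · intro x hx
      rw [interior_Icc] at hx
      have := two_mul_le_one_add_rpow_sub_one_sub_rpow (r := p - 1) (by linarith) (by linarith)
        hx.1.le hx.2.le
      exact mul_nonneg (by linarith) (by linarith)
  have := hmono (Set.left_mem_Icc.2 zero_le_one) ⟨hy0, hy1⟩ hy0
  simp only [hf] at this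
  norm_num at this
  linarith

/-- The two-point inequality from `L^p` to `L^2` for `1 < p ≤ 2`. -/
lemma two_point_le_of_le_two {p : ℝ} (hp1 : 1 < p) (hp2 : p ≤ 2) (a b : ℝ) :
    (a ^ 2 + (p - 1) * b ^ 2) ^ (p / 2) ≤ (|a + b| ^ p + |a - b| ^ p) / 2 := by
  wlog ha : 0 ≤ a generalizing a
  · have := this (-a) (by linarith)
    rw [neg_sq, show -a + b = -(a - b) by ring, show -a - b = -(a + b) by ring, abs_neg,
      abs_neg] at this
    linarith
  wlog hb : 0 ≤ b generalizing b
  · have := this (-b) (by linarith)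
    rw [neg_sq, sub_neg_eq_add, ← sub_eq_add_neg] at this
    linarith
  wlog hab : b ≤ a generalizing a b
  · refine le_trans (Real.rpow_le_rpow (by nlinarith [sq_nonneg a, sq_nonneg b]) ?_
      (by linarith)) ((this b hb a ha (by linarith)).trans_eq ?_)
    · nlinarith [mul_nonneg (sub_nonneg.2 hp2) (mul_nonneg (sub_nonneg.2 (not_le.1 hab).le)
        (add_nonneg ha hb))]
    · rw [add_comm b a, abs_sub_comm]
  rcases ha.eq_or_lt with rfl | ha
  · obtain rfl : b = 0 := le_antisymm hab hb
    have : p / 2 ≠ 0 := by linarith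
    have : p ≠ 0 := by linarith
    simp [Real.zero_rpow, *]
  obtain ⟨y, rfl⟩ : ∃ y, b = a * y := ⟨b / a, by field_simp⟩
  have hy0 : 0 ≤ y := nonneg_of_mul_nonneg_right hb ha
  have hy1 : y ≤ 1 := by nlinarith
  have h1 : a ^ 2 + (p - 1) * (a * y) ^ 2 = a ^ 2 * (1 + (p - 1) * y ^ 2) := by ring
  have h2 : 0 ≤ (p - 1) * y ^ 2 := mul_nonneg (by linarith) (sq_nonneg y)
  have h3 : (a ^ 2) ^ (p / 2) = a ^ p := by
    rw [← Real.rpow_natCast, ← Real.rpow_mul ha.le]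
    congr 1
    push_cast; ring
  have h4 : |a + a * y| = a * (1 + y) := by rw [abs_of_nonneg (by positivity)]; ring
  have h5 : |a - a * y| = a * (1 - y) := by
    rw [abs_of_nonneg (by nlinarith)]; ring
  rw [h1, h4, h5, Real.mul_rpow (by positivity) (by positivity), h3,
    Real.mul_rpow ha.le (by linarith), Real.mul_rpow ha.le (by linarith), ← mul_add, mul_div_assoc]
  refine mul_le_mul_of_nonneg_left ?_ (by positivity)
  refine le_trans ?_ (one_add_sq_le_avg_rpow hp1 hp2 hy0 hy1)
  exact rpow_one_add_le_one_add_mul_self (by linarith) (by linarith) (by linarith)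

/-- The two-point inequality from `L^2` to `L^q` for `q ≥ 2`. -/
lemma two_point_le_of_two_le {q : ℝ} (hq : 2 ≤ q) (a b : ℝ) :
    (|a + b| ^ q + |a - b| ^ q) / 2 ≤ (a ^ 2 + (q - 1) * b ^ 2) ^ (q / 2) := by
  set u := a + b with hu
  set v := a - b with hv
  set u' := SignType.sign u * |u| ^ (q - 1) with hu'
  set v' := SignType.sign v * |v| ^ (q - 1) with hv'
  have key (t : ℝ) : t * (SignType.sign t * |t| ^ (q - 1)) = |t| ^ q := by
    rw [← mul_assoc, self_mul_sign, ← Real.rpow_one_add' (abs_nonneg t) (by linarith)]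
    congr 1; ring
  set p := q / (q - 1) with hp
  have hq1 : 0 < q - 1 := by linarith
  have key' (t : ℝ) : |SignType.sign t * |t| ^ (q - 1)| ^ p = |t| ^ q := by
    rcases eq_or_ne t 0 with rfl | ht
    · have h1 : p ≠ 0 := by positivity
      have h2 : q ≠ 0 := by linarith
      simp [Real.zero_rpow h1, Real.zero_rpow h2]
    · have : |((SignType.sign t : SignType) : ℝ)| = 1 := by
        rcases lt_or_gt_of_ne ht with h | h <;> simp [h]
      rw [abs_mul, this, one_mul, abs_of_nonneg (by positivity), ← Real.rpow_mul (abs_nonneg t)]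
      congr 1
      rw [hp]; field_simp
  set A := (|u| ^ q + |v| ^ q) / 2 with hA
  have hA0 : 0 ≤ A := by positivity
  set a' := (u' + v') / 2 with ha'
  set b' := (u' - v') / 2 with hb'
  have hsum : A = a * a' + b * b' := by
    rw [hA, ← key u, ← key v, ← hu', ← hv', ha', hb', hu, hv]; ring
  have hpm : p - 1 = 1 / (q - 1) := by rw [hp]; field_simp; ring
  have hp1 : 1 < p := by
    have : 0 < 1 / (q - 1) := by positivity
    linarith
  have hp2 : p ≤ 2 := by
    have : 1 / (q - 1) ≤ 1 := by rw [div_le_one hq1]; linarith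
    linarith
  have hdual := two_point_le_of_le_two hp1 hp2 a' b'
  rw [show a' + b' = u' by rw [ha', hb']; ring, show a' - b' = v' by rw [ha', hb']; ring, hu', hv',
    key' u, key' v, ← hA, hpm] at hdual
  set B := a' ^ 2 + 1 / (q - 1) * b' ^ 2 with hB
  have hB0 : 0 ≤ B := by positivity
  set D := a ^ 2 + (q - 1) * b ^ 2 with hD
  have hD0 : 0 ≤ D := by positivity
  have hCS : A ^ 2 ≤ D * B := by
    have : D * B - A ^ 2 = (q - 1) * (a' * b - 1 / (q - 1) * (a * b')) ^ 2 := by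
      rw [hsum, hD, hB]; field_simp; ring
    have h : 0 ≤ (q - 1) * (a' * b - 1 / (q - 1) * (a * b')) ^ 2 := by positivity
    linarith
  rcases hA0.eq_or_lt with h0 | hApos
  · rw [← h0]; positivity
  have hB2 : B ≤ A ^ (2 / p) := by
    have := Real.rpow_le_rpow (by positivity) hdual (show 0 ≤ 2 / p by positivity)
    rwa [← Real.rpow_mul hB0, show p / 2 * (2 / p) = 1 by field_simp, Real.rpow_one] at this
  have h6 : A ^ (2 / q) * A ^ (2 / p) = A ^ 2 := by
    rw [← Real.rpow_add hApos, ← Real.rpow_natCast]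
    congr 1
    rw [hp]; field_simp; push_cast; ring
  have h7 : A ^ (2 / q) ≤ D := by
    have : A ^ (2 / q) * A ^ (2 / p) ≤ D * A ^ (2 / p) := by
      rw [h6]; exact hCS.trans (mul_le_mul_of_nonneg_left hB2 hD0)
    exact le_of_mul_le_mul_right this (by positivity)
  have := Real.rpow_le_rpow (by positivity) h7 (show 0 ≤ q / 2 by linarith)
  rwa [← Real.rpow_mul hA0, show 2 / q * (q / 2) = 1 by field_simp, Real.rpow_one] at this

lemma derivative_hermite_succ (k : ℕ) : Polynomial.derivative (Polynomial.hermite (k + 1)) =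
    ((k + 1 : ℕ) : Polynomial ℤ) * Polynomial.hermite k := by
  induction k with
  | zero => simp
  | succ k ih =>
    rw [Polynomial.hermite_succ (k + 1), Polynomial.derivative_sub, Polynomial.derivative_mul,
      Polynomial.derivative_X, ih, Polynomial.derivative_natCast_mul, Polynomial.hermite_succ k]
    push_cast
    ring

/-- The real values of the unnormalized probabilists' Hermite polynomial `H_k`. -/
noncomputable def hermiteEval (k : ℕ) (t : ℝ) : ℝ :=
  ((Polynomial.hermite k).map (Int.castRingHom ℝ)).eval t

lemma hermiteEval_add_two (k : ℕ) (t : ℝ) :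
    hermiteEval (k + 2) t = t * hermiteEval (k + 1) t - (k + 1) * hermiteEval k t := by
  unfold hermiteEval
  rw [Polynomial.hermite_succ (k + 1), derivative_hermite_succ]
  simp

/-- Polynomials in `s` interpolating, as `ε` goes from `1 / N` to `0`, between the normalized
elementary symmetric polynomials of `N` signs with normalized sum `s` and the Hermite
polynomials. -/
noncomputable def signHermite (ε s : ℝ) : ℕ → ℝ
  | 0 => 1
  | 1 => s
  | k + 2 => s * signHermite ε s (k + 1) - (k + 1) * (1 - k * ε) * signHermite ε s k

lemma signHermite_zero_left (s : ℝ) (k : ℕ) : signHermite 0 s k = hermiteEval k s := by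
  induction k using Nat.twoStepInduction with
  | zero => simp [signHermite, hermiteEval]
  | one => simp [signHermite, hermiteEval]
  | more k h0 h1 => rw [signHermite, hermiteEval_add_two, h0, h1]; ring

lemma continuous_signHermite (k : ℕ) :
    Continuous fun z : ℝ × ℝ => signHermite z.2 z.1 k := by
  induction k using Nat.twoStepInduction with
  | zero => simpa [signHermite] using continuous_const
  | one => simpa [signHermite] using continuous_fst
  | more k h0 h1 => simp only [signHermite]; fun_prop

/-- The sign of a bit. -/
def bitSign (b : Bool) : ℝ := if b then 1 else -1

lemma bitSign_sq (b : Bool) : bitSign b ^ 2 = 1 := by cases b <;> simp [bitSign]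

/-- The `k`-th elementary symmetric polynomial of the signs of a bit string. -/
noncomputable def signEsymm (N k : ℕ) (x : Fin N → Bool) : ℝ :=
  (∏ i, (1 + Polynomial.C (bitSign (x i)) * Polynomial.X)).coeff k

lemma coeff_prod_one_add_C_mul_X (N k : ℕ) (t : Fin N → ℝ) :
    (∏ i, (1 + Polynomial.C (t i) * Polynomial.X)).coeff k =
      ∑ α : Fin N → Fin 2, if ∑ i, (α i : ℕ) = k then ∏ i, t i ^ (α i : ℕ) else 0 := by
  have h (i : Fin N) : 1 + Polynomial.C (t i) * Polynomial.X =
      ∑ b : Fin 2, Polynomial.C (t i ^ (b : ℕ)) * Polynomial.X ^ (b : ℕ) := by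
    simp [Fin.sum_univ_two]
  simp_rw [h]
  rw [Finset.prod_univ_sum, Polynomial.finsetSum_coeff, Fintype.piFinset_univ]
  refine Finset.sum_congr rfl fun α _ => ?_
  rw [Finset.prod_mul_distrib, Finset.prod_pow_eq_pow_sum, ← map_prod, Polynomial.coeff_C_mul_X_pow]
  simp [eq_comm]

lemma signEsymm_eq_sum (N k : ℕ) (x : Fin N → Bool) : signEsymm N k x =
    ∑ α : Fin N → Fin 2, if ∑ i, (α i : ℕ) = k then ∏ i, bitSign (x i) ^ (α i : ℕ) else 0 :=
  coeff_prod_one_add_C_mul_X N k fun i => bitSign (x i)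

lemma card_filter_sum_eq (N k : ℕ) :
    (∑ α : Fin N → Fin 2, if ∑ i, (α i : ℕ) = k then (1 : ℝ) else 0) = N.choose k := by
  have := coeff_prod_one_add_C_mul_X N k fun _ => 1
  simp only [one_pow, Finset.prod_const_one] at this
  rw [← this]
  simp [Polynomial.coeff_one_add_X_pow]

lemma signEsymm_zero (N : ℕ) (x : Fin N → Bool) : signEsymm N 0 x = 1 := by
  simp [signEsymm, Polynomial.coeff_zero_eq_eval_zero, Polynomial.eval_prod]

lemma derivative_signProd (N : ℕ) (x : Fin N → Bool) :
    (1 - Polynomial.X ^ 2) * Polynomial.derivative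
      (∏ i, (1 + Polynomial.C (bitSign (x i)) * Polynomial.X)) =
    (Polynomial.C (∑ i, bitSign (x i)) - (N : Polynomial ℝ) * Polynomial.X) *
      ∏ i, (1 + Polynomial.C (bitSign (x i)) * Polynomial.X) := by
  rw [Polynomial.derivative_prod_finset, Finset.mul_sum]
  have h (i : Fin N) : (1 - Polynomial.X ^ 2) *
      ((∏ j ∈ Finset.univ.erase i, (1 + Polynomial.C (bitSign (x j)) * Polynomial.X)) *
        Polynomial.derivative (1 + Polynomial.C (bitSign (x i)) * Polynomial.X)) =
      (Polynomial.C (bitSign (x i)) - Polynomial.X) *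
      ∏ j, (1 + Polynomial.C (bitSign (x j)) * Polynomial.X) := by
    rw [← Finset.mul_prod_erase Finset.univ _ (Finset.mem_univ i)]
    have hx : Polynomial.C (bitSign (x i)) ^ 2 = 1 := by
      rw [← Polynomial.C_pow, bitSign_sq, Polynomial.C_1]
    simp only [Polynomial.derivative_add, Polynomial.derivative_one, zero_add,
      Polynomial.derivative_C_mul, Polynomial.derivative_X, mul_one]
    linear_combination (-(Polynomial.X *
      ∏ j ∈ Finset.univ.erase i, (1 + Polynomial.C (bitSign (x j)) * Polynomial.X))) * hx
  rw [Finset.sum_congr rfl fun i _ => h i, ← Finset.sum_mul]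
  congr 1
  simp

lemma signEsymm_one (N : ℕ) (x : Fin N → Bool) :
    signEsymm N 1 x = ∑ i, bitSign (x i) := by
  have h := congrArg (fun P => Polynomial.coeff P 0) (derivative_signProd N x)
  simp only [sub_mul, one_mul, mul_assoc, Polynomial.coeff_sub, Polynomial.coeff_derivative,
    Polynomial.coeff_C_mul, Polynomial.coeff_natCast_mul] at h
  have h0 := signEsymm_zero N x
  unfold signEsymm at *
  rw [h0] at h
  simpa using h

lemma signEsymm_add_two (N k : ℕ) (x : Fin N → Bool) :
    (k + 2) * signEsymm N (k + 2) x =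
      (∑ i, bitSign (x i)) * signEsymm N (k + 1) x - (N - k) * signEsymm N k x := by
  have h := congrArg (fun P => Polynomial.coeff P (k + 1)) (derivative_signProd N x)
  simp only [sub_mul, one_mul, mul_assoc, Polynomial.coeff_sub, Polynomial.coeff_derivative,
    Polynomial.coeff_C_mul, Polynomial.coeff_natCast_mul, Polynomial.coeff_X_mul] at h
  have h2 : (Polynomial.X ^ 2 * Polynomial.derivative
      (∏ i, (1 + Polynomial.C (bitSign (x i)) * Polynomial.X))).coeff (k + 1) =
      k * signEsymm N k x := by
    rcases k with _ | k
    · rw [Polynomial.coeff_X_pow_mul']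
      simp
    · rw [show k + 1 + 1 = k + 2 by ring, Polynomial.coeff_X_pow_mul,
        Polynomial.coeff_derivative, signEsymm]
      push_cast; ring
  rw [h2] at h
  unfold signEsymm at *
  push_cast at h
  linear_combination h

/-- The normalized sum of the signs of a bit string. -/
noncomputable def signSum (N : ℕ) (x : Fin N → Bool) : ℝ :=
  (Real.sqrt N)⁻¹ * ∑ i, bitSign (x i)

lemma signHermite_signSum {N : ℕ} (hN : 0 < N) (x : Fin N → Bool) (k : ℕ) :
    signHermite (1 / N) (signSum N x) k =
      (Real.sqrt N)⁻¹ ^ k * k.factorial * signEsymm N k x := by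
  have hN' : (0 : ℝ) < N := by exact_mod_cast hN
  induction k using Nat.twoStepInduction with
  | zero => simp [signHermite, signEsymm_zero]
  | one => simp [signHermite, signEsymm_one, signSum]
  | more k h0 h1 =>
    rw [signHermite, h0, h1, Nat.factorial_succ (k + 1), Nat.factorial_succ k, signSum]
    have h2 : (Real.sqrt N)⁻¹ ^ 2 = 1 / N := by rw [inv_pow, Real.sq_sqrt hN'.le, one_div]
    have h3 : (Real.sqrt N)⁻¹ ^ 2 * N = 1 := by rw [h2]; field_simp
    have h4 : (Real.sqrt N)⁻¹ ^ (k + 2) = (Real.sqrt N)⁻¹ ^ k * (Real.sqrt N)⁻¹ ^ 2 := pow_add ..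
    have h5 : (Real.sqrt N)⁻¹ ^ (k + 1) = (Real.sqrt N)⁻¹ ^ k * (Real.sqrt N)⁻¹ := pow_succ ..
    have key := signEsymm_add_two N k x
    rw [h4, h5, ← h2]
    push_cast
    linear_combination (-(((Real.sqrt N)⁻¹ ^ k * (Real.sqrt N)⁻¹ ^ 2) * (k + 1) * k.factorial)) * key
      + (Real.sqrt N)⁻¹ ^ k * (k + 1) * k.factorial * signEsymm N k x * h3

/-- The law of a fair bit. -/
noncomputable def fairBit : Measure Bool :=
  (2⁻¹ : ENNReal) • Measure.dirac true + (2⁻¹ : ENNReal) • Measure.dirac false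

instance isProbabilityMeasure_fairBit : IsProbabilityMeasure fairBit where
  measure_univ := by simp [fairBit, ENNReal.inv_two_add_inv_two]

lemma integral_fairBit (f : Bool → ℝ) : ∫ b, f b ∂fairBit = (f true + f false) / 2 := by
  rw [fairBit, integral_add_measure (Integrable.of_finite.smul_measure (by simp))
    (Integrable.of_finite.smul_measure (by simp))]
  simp
  ring

lemma hypercontractive_fairBit {q : ℝ} (hq : 2 ≤ q) :
    Hypercontractive q fairBit (fun (i : Fin 2) b => bitSign b ^ (i : ℕ))
      (fun i => (q - 1) ^ (i : ℕ)) := by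
  intro s c
  set c' : Fin 2 → ℝ := fun i => if i ∈ s then c i else 0 with hc'
  have h1 (b : Bool) : ∑ i ∈ s, c i * bitSign b ^ (i : ℕ) = c' 0 + c' 1 * bitSign b := by
    rw [← Finset.univ_inter s, ← Finset.sum_ite_mem, Fin.sum_univ_two]
    simp only [hc']
    split_ifs <;> simp
  have h2 : ∑ i ∈ s, (q - 1) ^ (i : ℕ) * c i ^ 2 = c' 0 ^ 2 + (q - 1) * c' 1 ^ 2 := by
    rw [← Finset.univ_inter s, ← Finset.sum_ite_mem, Fin.sum_univ_two]
    simp only [hc']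
    split_ifs <;> simp
  simp_rw [h1, h2]
  refine le_of_eq_of_le ?_ (ENNReal.ofReal_le_ofReal (two_point_le_of_two_le hq (c' 0) (c' 1)))
  rw [fairBit, lintegral_add_measure, lintegral_smul_measure, lintegral_smul_measure,
    lintegral_dirac, lintegral_dirac, div_eq_inv_mul, ENNReal.ofReal_mul (by norm_num),
    ENNReal.ofReal_add (by positivity) (by positivity), ENNReal.ofReal_inv_of_pos (by norm_num)]
  simp [bitSign, mul_add, sub_eq_add_neg]

lemma sum_mul_sum_ite {ι : Type*} [Fintype ι] (d : ι → ℕ) (s : Finset ℕ) (F : ℕ → ℝ)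
    (G : ι → ℝ) :
    ∑ k ∈ s, F k * (∑ i, if d i = k then G i else 0) =
      ∑ i, (if d i ∈ s then F (d i) else 0) * G i := by
  simp_rw [Finset.mul_sum]
  rw [Finset.sum_comm]
  refine Finset.sum_congr rfl fun i _ => ?_
  simp [mul_ite]

lemma lintegral_signHermite_le {q : ℝ} (hq : 2 ≤ q) {N : ℕ} (hN : 0 < N) (s : Finset ℕ)
    (c : ℕ → ℝ) :
    ∫⁻ x, ENNReal.ofReal (|∑ k ∈ s, c k * signHermite (1 / N) (signSum N x) k| ^ q)
      ∂(Measure.pi fun _ : Fin N => fairBit) ≤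
    ENNReal.ofReal ((∑ k ∈ s, (q - 1) ^ k * (k.factorial * c k ^ 2)) ^ (q / 2)) := by
  have hN' : (0 : ℝ) < N := by exact_mod_cast hN
  set F : ℕ → ℝ := fun k => c k * ((Real.sqrt N)⁻¹ ^ k * k.factorial) with hF
  have h := (hypercontractive_fairBit hq).pi hq (fun i => .of_discrete)
    (fun i => pow_nonneg (by linarith) _) N Finset.univ
    (fun α => if ∑ i, (α i : ℕ) ∈ s then F (∑ i, (α i : ℕ)) else 0)
  have hL (x : Fin N → Bool) : ∑ k ∈ s, c k * signHermite (1 / N) (signSum N x) k =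
      ∑ α : Fin N → Fin 2, (if ∑ i, (α i : ℕ) ∈ s then F (∑ i, (α i : ℕ)) else 0) *
        ∏ i, bitSign (x i) ^ (α i : ℕ) := by
    rw [← sum_mul_sum_ite]
    refine Finset.sum_congr rfl fun k _ => ?_
    rw [signHermite_signSum hN, signEsymm_eq_sum, hF]
    ring
  have hR : ∑ α : Fin N → Fin 2, (∏ i, (q - 1) ^ (α i : ℕ)) *
      (if ∑ i, (α i : ℕ) ∈ s then F (∑ i, (α i : ℕ)) else 0) ^ 2 =
      ∑ k ∈ s, (q - 1) ^ k * F k ^ 2 * N.choose k := by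
    simp_rw [← card_filter_sum_eq]
    rw [sum_mul_sum_ite]
    refine Finset.sum_congr rfl fun α _ => ?_
    rw [Finset.prod_pow_eq_pow_sum]
    split_ifs <;> simp
  rw [hR] at h
  simp_rw [hL]
  refine h.trans (ENNReal.ofReal_le_ofReal (Real.rpow_le_rpow ?_ ?_ (by linarith)))
  · exact Finset.sum_nonneg fun k _ => mul_nonneg
      (mul_nonneg (pow_nonneg (by linarith) _) (sq_nonneg _)) (by positivity)
  · refine Finset.sum_le_sum fun k _ => ?_
    rw [mul_assoc]
    refine mul_le_mul_of_nonneg_left ?_ (pow_nonneg (by linarith) _)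
    have h1 : ((Real.sqrt N)⁻¹ ^ k) ^ 2 = ((N : ℝ) ^ k)⁻¹ := by
      rw [← pow_mul, mul_comm, pow_mul, inv_pow, Real.sq_sqrt hN'.le, inv_pow]
    have h2 : (k.factorial : ℝ) * N.choose k ≤ (N : ℝ) ^ k := by
      rw [← Nat.cast_mul, ← Nat.descFactorial_eq_factorial_mul_choose]
      exact_mod_cast Nat.descFactorial_le_pow N k
    calc F k ^ 2 * N.choose k
        = k.factorial * c k ^ 2 * (((N : ℝ) ^ k)⁻¹ * (k.factorial * N.choose k)) := by
          rw [hF, ← h1]; ring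
      _ ≤ k.factorial * c k ^ 2 * (((N : ℝ) ^ k)⁻¹ * N ^ k) := by gcongr
      _ = k.factorial * c k ^ 2 := by field_simp

lemma measurable_bitSign : Measurable bitSign := .of_discrete

lemma measurable_signSum (N : ℕ) : Measurable (signSum N) := .of_discrete

/-- The law of the normalized sum of `N` independent fair signs. -/
noncomputable def signSumLaw (N : ℕ) : ProbabilityMeasure ℝ :=
  ⟨(Measure.pi fun _ : Fin N => fairBit).map (signSum N),
    Measure.isProbabilityMeasure_map (measurable_signSum N).aemeasurable⟩

lemma charFun_signSumLaw (N : ℕ) (t : ℝ) : charFun (signSumLaw N : Measure ℝ) t =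
    charFun (fairBit.map bitSign) ((Real.sqrt N)⁻¹ * t) ^ N := by
  rw [charFun_apply_real, charFun_apply_real, signSumLaw, ProbabilityMeasure.coe_mk,
    integral_map (measurable_signSum N).aemeasurable (by fun_prop),
    integral_map measurable_bitSign.aemeasurable (by fun_prop)]
  have h (x : Fin N → Bool) : Complex.exp (t * signSum N x * Complex.I) =
      ∏ i, Complex.exp (((Real.sqrt N)⁻¹ * t : ℝ) * bitSign (x i) * Complex.I) := by
    rw [← Complex.exp_sum, signSum]
    push_cast
    rw [← Finset.sum_mul, ← Finset.mul_sum]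
    ring_nf
  simp_rw [h]
  rw [integral_fintype_prod_eq_prod (μ := fun _ : Fin N => fairBit)
    (f := fun _ b => Complex.exp (((Real.sqrt N)⁻¹ * t : ℝ) * bitSign b * Complex.I))]
  simp

open Filter Topology in
lemma tendsto_signSumLaw : Tendsto signSumLaw atTop (𝓝 ⟨gaussianReal 0 1, inferInstance⟩) := by
  refine ProbabilityMeasure.tendsto_of_tendsto_charFun fun t => ?_
  simp_rw [charFun_signSumLaw, ProbabilityMeasure.coe_mk, charFun_gaussianReal]
  convert tendsto_charFun_inv_sqrt_mul_pow (P := fairBit) measurable_bitSign.aemeasurable ?_ ?_ t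
    using 2
  · simp [neg_div]
  · rw [integral_fairBit]; simp [bitSign]
  · rw [integral_fairBit]; simp [bitSign]

open Filter Topology in
lemma lintegral_gaussian_hermiteEval_le {q : ℝ} (hq : 2 ≤ q) (s : Finset ℕ) (c : ℕ → ℝ) :
    ∫⁻ t, ENNReal.ofReal (|∑ k ∈ s, c k * hermiteEval k t| ^ q) ∂(gaussianReal 0 1) ≤
    ENNReal.ofReal ((∑ k ∈ s, (q - 1) ^ k * (k.factorial * c k ^ 2)) ^ (q / 2)) := by
  set f : ℝ × ℝ → ℝ := fun z => |∑ k ∈ s, c k * signHermite z.2 z.1 k| ^ q with hf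
  have hfc : Continuous f := by
    have := continuous_signHermite
    exact Continuous.rpow_const (by fun_prop) fun _ => Or.inr (by linarith)
  set γ : ProbabilityMeasure ℝ := ⟨gaussianReal 0 1, inferInstance⟩
  have hlim : Tendsto (fun N : ℕ => (signSumLaw N).prod (diracProba (1 / (N : ℝ)))) atTop
      (𝓝 (γ.prod (diracProba 0))) :=
    (ProbabilityMeasure.continuous_prod.tendsto (γ, diracProba 0)).comp
      (tendsto_signSumLaw.prodMk_nhds
        ((continuous_diracProba.tendsto 0).comp tendsto_one_div_atTop_nhds_zero_nat))
  have hprod (ν : ProbabilityMeasure ℝ) (ε : ℝ) :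
      ∫⁻ z, ENNReal.ofReal (f z) ∂(ν.prod (diracProba ε) : ProbabilityMeasure (ℝ × ℝ)) =
      ∫⁻ t, ENNReal.ofReal (f (t, ε)) ∂(ν : Measure ℝ) := by
    rw [ProbabilityMeasure.toMeasure_prod, lintegral_prod _ (by fun_prop)]
    simp [diracProba]
  have := lintegral_le_liminf_lintegral_of_forall_isOpen_measure_le_liminf_measure hfc
    (fun z => by positivity)
    fun G hG => ProbabilityMeasure.le_liminf_measure_open_of_tendsto hlim hG
  simp_rw [hprod] at this
  simp only [hf, signHermite_zero_left] at this
  refine this.trans (liminf_le_of_frequently_le' (Eventually.frequently ?_))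
  filter_upwards [eventually_gt_atTop 0] with N hN
  rw [signSumLaw, ProbabilityMeasure.coe_mk, lintegral_map ?_ (measurable_signSum N)]
  · exact lintegral_signHermite_le hq hN s c
  · have : Measurable fun t : ℝ => f (t, 1 / N) := (hfc.comp (by fun_prop)).measurable
    exact this.ennreal_ofReal

lemma hermiteFn_eq (k : ℕ) (t : ℝ) : hermiteFn k t = hermiteEval k t / Real.sqrt k.factorial := rfl

lemma measurable_hermiteFn (k : ℕ) : Measurable (hermiteFn k) := by
  unfold hermiteFn
  exact ((Polynomial.continuous _).div_const _).measurable

lemma hypercontractive_gaussianReal {q : ℝ} (hq : 2 ≤ q) :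
    Hypercontractive q (gaussianReal 0 1) hermiteFn (fun k => (q - 1) ^ k) := by
  intro s c
  convert lintegral_gaussian_hermiteEval_le hq s (fun k => c k / Real.sqrt k.factorial) using 5
    with t
  · exact congrArg (|·|) (Finset.sum_congr rfl fun k _ => by rw [hermiteFn_eq]; ring)
  · rw [div_pow, Real.sq_sqrt (by positivity)]
    field_simp

lemma integrable_polynomial_gaussianReal (p : Polynomial ℝ) :
    Integrable (fun t => p.eval t) (gaussianReal 0 1) := by
  induction p using Polynomial.induction_on' with
  | add p r hp hr => simp only [Polynomial.eval_add]; exact hp.add hr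
  | monomial k a =>
    simp only [Polynomial.eval_monomial]
    refine Integrable.const_mul ?_ a
    have h := (memLp_id_gaussianReal' (μ := 0) (v := 1) k (by simp)).integrable_norm_pow'
    rw [← integrable_norm_iff (by fun_prop)]
    simpa using h

lemma hasDerivAt_gaussianPDFReal (t : ℝ) :
    HasDerivAt (gaussianPDFReal 0 1) (-t * gaussianPDFReal 0 1 t) t := by
  rw [gaussianPDFReal_def]
  have h : HasDerivAt (fun x : ℝ => -(x - 0) ^ 2 / (2 * ((1 : NNReal) : ℝ))) (-t) t := by
    refine ((((hasDerivAt_id t).sub_const 0).pow 2).neg.div_const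
      (2 * ((1 : NNReal) : ℝ))).congr_deriv ?_
    simp only [id, sub_zero, NNReal.coe_one, Nat.cast_ofNat]
    ring
  exact (h.exp.const_mul _).congr_deriv (by ring)

lemma integrable_polynomial_mul_gaussianPDFReal (p : Polynomial ℝ) :
    Integrable fun t => p.eval t * gaussianPDFReal 0 1 t := by
  have h := integrable_polynomial_gaussianReal p
  rw [gaussianReal_of_var_ne_zero _ one_ne_zero, integrable_withDensity_iff_integrable_smul'
    (measurable_gaussianPDF 0 1) (ae_of_all _ fun _ => gaussianPDF_lt_top)] at h
  simpa [mul_comm] using h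

lemma integral_gaussianReal_mul_sub_derivative (p : Polynomial ℝ) :
    ∫ t, (Polynomial.X * p - Polynomial.derivative p).eval t ∂(gaussianReal 0 1) = 0 := by
  rw [integral_gaussianReal_eq_integral_smul one_ne_zero, ← neg_eq_zero, ← integral_neg]
  refine integral_eq_zero_of_hasDerivAt_of_integrable
    (f := fun t => p.eval t * gaussianPDFReal 0 1 t) (fun t => ?_) ?_
    (integrable_polynomial_mul_gaussianPDFReal p)
  · refine ((p.hasDerivAt t).mul (hasDerivAt_gaussianPDFReal t)).congr_deriv ?_
    simp only [Polynomial.eval_sub, Polynomial.eval_mul, Polynomial.eval_X, smul_eq_mul]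
    ring
  · simp_rw [smul_eq_mul, mul_comm (gaussianPDFReal 0 1 _)]
    exact (integrable_polynomial_mul_gaussianPDFReal _).neg

/-- The probabilists' Hermite polynomial with real coefficients. -/
noncomputable def realHermite (k : ℕ) : Polynomial ℝ :=
  (Polynomial.hermite k).map (Int.castRingHom ℝ)

lemma realHermite_zero : realHermite 0 = 1 := by simp [realHermite]

lemma realHermite_succ (k : ℕ) : realHermite (k + 1) =
    Polynomial.X * realHermite k - Polynomial.derivative (realHermite k) := by
  simp [realHermite, Polynomial.hermite_succ, Polynomial.derivative_map]

lemma derivative_realHermite_succ (k : ℕ) : Polynomial.derivative (realHermite (k + 1)) =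
    ((k + 1 : ℕ) : Polynomial ℝ) * realHermite k := by
  rw [realHermite, Polynomial.derivative_map, derivative_hermite_succ]
  simp [realHermite]

lemma integral_realHermite_succ_mul (k : ℕ) (p : Polynomial ℝ) :
    ∫ t, (realHermite (k + 1) * p).eval t ∂(gaussianReal 0 1) =
      ∫ t, (realHermite k * Polynomial.derivative p).eval t ∂(gaussianReal 0 1) := by
  rw [← sub_eq_zero, ← integral_sub (integrable_polynomial_gaussianReal _)
    (integrable_polynomial_gaussianReal _)]
  refine Eq.trans ?_ (integral_gaussianReal_mul_sub_derivative (realHermite k * p))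
  simp_rw [← Polynomial.eval_sub]
  congr! 3 with t
  rw [realHermite_succ, Polynomial.derivative_mul]
  ring

lemma integral_realHermite_mul (j k : ℕ) :
    ∫ t, (realHermite j * realHermite k).eval t ∂(gaussianReal 0 1) =
      if j = k then (k.factorial : ℝ) else 0 := by
  induction j generalizing k with
  | zero =>
    cases k with
    | zero => simp [realHermite_zero]
    | succ k =>
      rw [mul_comm, integral_realHermite_succ_mul, realHermite_zero]
      simp
  | succ j ih =>
    rw [integral_realHermite_succ_mul]
    cases k with
    | zero => simp [realHermite_zero]
    | succ k =>
      have h := ih k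
      simp only [Polynomial.eval_mul] at h
      simp only [derivative_realHermite_succ, Polynomial.eval_mul, Polynomial.eval_natCast,
        mul_left_comm _ ((k + 1 : ℕ) : ℝ)]
      rw [integral_const_mul, h]
      simp [Nat.factorial_succ]

lemma hermiteFn_mul_hermiteFn (j k : ℕ) (t : ℝ) : hermiteFn j t * hermiteFn k t =
    (realHermite j * realHermite k).eval t / (√j.factorial * √k.factorial) := by
  rw [Polynomial.eval_mul, hermiteFn, hermiteFn, realHermite, realHermite, div_mul_div_comm]

lemma integral_hermiteFn_mul_hermiteFn (j k : ℕ) :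
    ∫ t, hermiteFn j t * hermiteFn k t ∂(gaussianReal 0 1) = if j = k then 1 else 0 := by
  simp_rw [hermiteFn_mul_hermiteFn]
  rw [integral_div, integral_realHermite_mul]
  split_ifs with h
  · subst h
    rw [Real.mul_self_sqrt (by positivity), div_self (by positivity)]
  · simp

lemma integrable_hermiteFn_mul_hermiteFn (j k : ℕ) :
    Integrable (fun t => hermiteFn j t * hermiteFn k t) (gaussianReal 0 1) := by
  simp_rw [hermiteFn_mul_hermiteFn]
  exact (integrable_polynomial_gaussianReal _).div_const _

lemma hermiteMv_mul_hermiteMv {n : ℕ} (α β : Fin n → ℕ) (x : Fin n → ℝ) :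
    hermiteMv α x * hermiteMv β x = ∏ i, hermiteFn (α i) (x i) * hermiteFn (β i) (x i) :=
  Finset.prod_mul_distrib.symm

lemma integrable_hermiteMv_mul_hermiteMv {n : ℕ} (α β : Fin n → ℕ) :
    Integrable (fun x => hermiteMv α x * hermiteMv β x) (gaussianN n) := by
  simp_rw [hermiteMv_mul_hermiteMv]
  exact Integrable.fintype_prod (f := fun i t => hermiteFn (α i) t * hermiteFn (β i) t)
    fun i => integrable_hermiteFn_mul_hermiteFn _ _

lemma integral_hermiteMv_mul_hermiteMv {n : ℕ} (α β : Fin n → ℕ) :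
    ∫ x, hermiteMv α x * hermiteMv β x ∂(gaussianN n) = if α = β then 1 else 0 := by
  simp_rw [hermiteMv_mul_hermiteMv, gaussianN]
  rw [integral_fintype_prod_eq_prod (μ := fun _ : Fin n => gaussianReal 0 1)
    (f := fun i t => hermiteFn (α i) t * hermiteFn (β i) t)]
  simp_rw [integral_hermiteFn_mul_hermiteFn, Finset.prod_ite_zero]
  simp [funext_iff]

lemma hermiteMv_zero {n : ℕ} (x : Fin n → ℝ) : hermiteMv 0 x = 1 := by
  simp [hermiteMv, hermiteFn]

lemma mul_hermiteFn_zero (t : ℝ) : t * hermiteFn 0 t = hermiteFn 1 t := by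
  simp [hermiteFn]

lemma mul_hermiteFn_succ (k : ℕ) (t : ℝ) : t * hermiteFn (k + 1) t =
    √((k + 2 : ℕ) : ℝ) * hermiteFn (k + 2) t + √((k + 1 : ℕ) : ℝ) * hermiteFn k t := by
  have h1 : (0 : ℝ) < √((k + 2 : ℕ) : ℝ) := by positivity
  have h2 : (0 : ℝ) < √((k + 1 : ℕ) : ℝ) := by positivity
  have h3 : (0 : ℝ) < √(k.factorial : ℝ) := by positivity
  have h4 : √((k + 1 : ℕ) : ℝ) ^ 2 = k + 1 := by
    rw [Real.sq_sqrt (by positivity)]; push_cast; ring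
  have h5 : √((k + 1).factorial : ℝ) = √((k + 1 : ℕ) : ℝ) * √(k.factorial : ℝ) := by
    rw [← Real.sqrt_mul (by positivity), ← Nat.cast_mul, Nat.factorial_succ]
  have h6 : √((k + 2).factorial : ℝ) = √((k + 2 : ℕ) : ℝ) * √((k + 1).factorial : ℝ) := by
    rw [← Real.sqrt_mul (by positivity), ← Nat.cast_mul, Nat.factorial_succ]
  rw [hermiteFn_eq, hermiteFn_eq, hermiteFn_eq, hermiteEval_add_two, h6, h5]
  field_simp
  rw [h4]
  ring

/-- The linear span of the multivariate Hermite polynomials. -/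
noncomputable def hermiteSpan (n : ℕ) : Submodule ℝ ((Fin n → ℝ) → ℝ) :=
  Submodule.span ℝ (Set.range hermiteMv)

lemma coord_mul_hermiteMv_mem {n : ℕ} (i : Fin n) (α : Fin n → ℕ) :
    (fun x => hermiteMv α x * x i) ∈ hermiteSpan n := by
  have key (k : ℕ) (x : Fin n → ℝ) : hermiteMv (Function.update α i k) x =
      hermiteFn k (x i) * ∏ j ∈ Finset.univ.erase i, hermiteFn (α j) (x j) := by
    rw [hermiteMv, ← Finset.mul_prod_erase _ _ (Finset.mem_univ i), Function.update_self]
    congr 1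
    refine Finset.prod_congr rfl fun j hj => ?_
    rw [Function.update_of_ne (Finset.ne_of_mem_erase hj)]
  have hmem (k : ℕ) : hermiteMv (Function.update α i k) ∈ hermiteSpan n :=
    Submodule.subset_span ⟨_, rfl⟩
  have hα (x : Fin n → ℝ) : hermiteMv α x =
      hermiteFn (α i) (x i) * ∏ j ∈ Finset.univ.erase i, hermiteFn (α j) (x j) := by
    rw [← key, Function.update_eq_self]
  cases h : α i with
  | zero =>
    convert hmem 1 using 1
    ext x
    rw [hα, key, h, ← mul_hermiteFn_zero]
    ring
  | succ k =>
    convert (hermiteSpan n).add_mem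
      ((hermiteSpan n).smul_mem (√((k + 2 : ℕ) : ℝ)) (hmem (k + 2)))
      ((hermiteSpan n).smul_mem (√((k + 1 : ℕ) : ℝ)) (hmem k)) using 1
    ext x
    rw [Pi.add_apply, Pi.smul_apply, Pi.smul_apply, key, key, hα, h, smul_eq_mul, smul_eq_mul]
    linear_combination (∏ j ∈ Finset.univ.erase i, hermiteFn (α j) (x j)) *
      mul_hermiteFn_succ k (x i)

lemma mul_coord_mem_hermiteSpan {n : ℕ} (i : Fin n) {f : (Fin n → ℝ) → ℝ}
    (hf : f ∈ hermiteSpan n) : (fun x => f x * x i) ∈ hermiteSpan n := by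
  induction hf using Submodule.span_induction with
  | mem f hf =>
    obtain ⟨α, rfl⟩ := hf
    exact coord_mul_hermiteMv_mem i α
  | zero => simp only [Pi.zero_apply, zero_mul]; exact (hermiteSpan n).zero_mem
  | add f g _ _ hf hg => simp only [Pi.add_apply, add_mul]; exact (hermiteSpan n).add_mem hf hg
  | smul a f _ hf =>
    simp only [Pi.smul_apply, smul_eq_mul, mul_assoc]
    exact (hermiteSpan n).smul_mem a hf

lemma eval_mem_hermiteSpan {n : ℕ} (g : MvPolynomial (Fin n) ℝ) :
    (fun x => eval x g) ∈ hermiteSpan n := by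
  induction g using MvPolynomial.induction_on with
  | C a =>
    convert (hermiteSpan n).smul_mem a (Submodule.subset_span ⟨0, rfl⟩) using 1
    ext x
    simp [hermiteMv_zero]
  | add p q hp hq => simp only [map_add]; exact (hermiteSpan n).add_mem hp hq
  | mul_X p i hp => simpa using mul_coord_mem_hermiteSpan i hp

lemma exists_eval_eq_sum_hermiteMv {n : ℕ} (g : MvPolynomial (Fin n) ℝ) :
    ∃ c : (Fin n → ℕ) →₀ ℝ, ∀ x, eval x g = ∑ α ∈ c.support, c α * hermiteMv α x := by
  obtain ⟨c, hc⟩ := Finsupp.mem_span_range_iff_exists_finsupp.1 (eval_mem_hermiteSpan g)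
  refine ⟨c, fun x => ?_⟩
  rw [← congrFun hc x, Finsupp.sum, Finset.sum_apply]
  rfl

lemma hermiteCoeff_eq {n : ℕ} {g : MvPolynomial (Fin n) ℝ} {c : (Fin n → ℕ) →₀ ℝ}
    (hc : ∀ x, eval x g = ∑ α ∈ c.support, c α * hermiteMv α x) (β : Fin n → ℕ) :
    hermiteCoeff g β = c β := by
  simp_rw [hermiteCoeff, hermiteCoeffF, hc, Finset.sum_mul, mul_assoc]
  rw [integral_finsetSum _ fun α _ => (integrable_hermiteMv_mul_hermiteMv α β).const_mul _]
  simp_rw [integral_const_mul, integral_hermiteMv_mul_hermiteMv]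
  simp [eq_comm]

lemma hyperVar_eq {n : ℕ} {g : MvPolynomial (Fin n) ℝ} {c : (Fin n → ℕ) →₀ ℝ}
    (hc : ∀ x, eval x g = ∑ α ∈ c.support, c α * hermiteMv α x) (R : ℝ) :
    hyperVar R g = ∑ α ∈ c.support.erase 0, R ^ (2 * ∑ i, α i) * c α ^ 2 := by
  have hpos (α : Fin n → ℕ) : 1 ≤ ∑ i, α i ↔ α ≠ 0 := by
    rw [Nat.one_le_iff_ne_zero, Ne, Finset.sum_eq_zero_iff, not_iff_not, funext_iff]
    simp
  simp_rw [hyperVar, hyperVarGE, hermiteCoeff_eq hc, hpos]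
  rw [tsum_eq_sum (s := c.support.erase 0)]
  · exact Finset.sum_congr rfl fun α hα => if_pos (Finset.ne_of_mem_erase hα)
  · intro α hα
    rw [Finset.mem_erase, not_and, Finsupp.mem_support_iff, not_not] at hα
    split_ifs with h
    · simp [hα h]
    · rfl

lemma eval_sub_integral_eq {n : ℕ} {g : MvPolynomial (Fin n) ℝ} {c : (Fin n → ℕ) →₀ ℝ}
    (hc : ∀ x, eval x g = ∑ α ∈ c.support, c α * hermiteMv α x) (x : Fin n → ℝ) :
    eval x g - ∫ y, eval y g ∂(gaussianN n) =
      ∑ α ∈ c.support.erase 0, c α * hermiteMv α x := by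
  have h0 : ∫ y, eval y g ∂(gaussianN n) = c 0 := by
    rw [← hermiteCoeff_eq hc 0]
    simp [hermiteCoeff, hermiteCoeffF, hermiteMv_zero]
  rw [h0, hc x]
  by_cases h : (0 : Fin n → ℕ) ∈ c.support
  · rw [← Finset.add_sum_erase _ _ h, hermiteMv_zero]
    ring
  · rw [Finset.erase_eq_of_notMem h, Finsupp.notMem_support_iff.1 h, sub_zero]

lemma integral_rpow_le_hyperVar {n : ℕ} (g : MvPolynomial (Fin n) ℝ) {R : ℝ} (hR : 1 ≤ R) :
    ∫ x, |eval x g - ∫ y, eval y g ∂(gaussianN n)| ^ (1 + R ^ 2) ∂(gaussianN n) ≤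
      hyperVar R g ^ ((1 + R ^ 2) / 2) := by
  have hq : 2 ≤ 1 + R ^ 2 := by nlinarith
  obtain ⟨c, hc⟩ := exists_eval_eq_sum_hermiteMv g
  have h := (hypercontractive_gaussianReal hq).pi hq measurable_hermiteFn
    (fun k => pow_nonneg (by nlinarith) k) n (c.support.erase 0) c
  simp_rw [eval_sub_integral_eq hc, hyperVar_eq hc]
  have hw (α : Fin n → ℕ) : ∏ k, (1 + R ^ 2 - 1) ^ α k = R ^ (2 * ∑ i, α i) := by
    rw [Finset.prod_pow_eq_pow_sum, pow_mul, add_sub_cancel_left]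
  simp_rw [hw] at h
  have hm : Measurable fun x : Fin n → ℝ =>
      |∑ α ∈ c.support.erase 0, c α * hermiteMv α x| ^ (1 + R ^ 2) := by
    have := measurable_hermiteFn
    unfold hermiteMv
    fun_prop
  rw [integral_eq_lintegral_of_nonneg_ae (ae_of_all _ fun x => by positivity)
    hm.aestronglyMeasurable]
  refine ENNReal.toReal_le_of_le_ofReal (Real.rpow_nonneg ?_ _) h
  exact Finset.sum_nonneg fun α _ => by positivity

/-- Hypervariance bound implies hyperconcentration: if `g` is a polynomial, `R > 1`,
`μ = E_{x ∼ N(0,1)^n}[g(x)]`, and `HyperVar_R[g] ≤ θ·μ²`, then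
`(E[|g(x) - μ|^{1+R²}])^{1/(1+R²)} ≤ √θ·|μ|`. -/
theorem hypervar_to_hyperconcentration (n : ℕ) (g : MvPolynomial (Fin n) ℝ)
    (R θ : ℝ) (hR : 1 < R) (hθ : 0 ≤ θ)
    (hv : hyperVar R g ≤ θ * (∫ x, eval x g ∂(gaussianN n)) ^ 2) :
    (∫ x, |eval x g - ∫ y, eval y g ∂(gaussianN n)| ^ (1 + R ^ 2) ∂(gaussianN n)) ^
        (1 / (1 + R ^ 2)) ≤
      Real.sqrt θ * |∫ x, eval x g ∂(gaussianN n)| := by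
  have hv0 : 0 ≤ hyperVar R g := by
    refine tsum_nonneg fun α => ?_
    split_ifs <;> positivity
  have hI : 0 ≤ ∫ x, |eval x g - ∫ y, eval y g ∂(gaussianN n)| ^ (1 + R ^ 2) ∂(gaussianN n) :=
    integral_nonneg fun x => by positivity
  refine (Real.rpow_le_rpow hI (integral_rpow_le_hyperVar g hR.le) (by positivity)).trans ?_
  rw [← Real.rpow_mul hv0, show (1 + R ^ 2) / 2 * (1 / (1 + R ^ 2)) = 1 / 2 by field_simp,
    ← Real.sqrt_eq_rpow]
  refine (Real.sqrt_le_sqrt hv).trans_eq ?_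
  rw [Real.sqrt_mul hθ, Real.sqrt_sq_eq_abs]
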